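/- Let σ₁, …, σ_k > 0. For each i, let θᵢ : ℝ^d × ℝ^{d₁} × ⋯ × ℝ^{d_{i−1}} → ℝ^{d_i} be measurable and 1-Lipschitz in its first argument uniformly in the others: ‖θᵢ(X, m_{<i}) − θᵢ(X', m_{<i})‖₂ ≤ ‖X − X'‖₂ for all X, X' and all m_{<i}. Let g : ℝ^{d₁} × ⋯ × ℝ^{d_k} → Y be measurable into a finite label set Y. Define the adaptive mechanism M(X) ∈ Y as g(m₁, …, m_k), where mᵢ = θᵢ(X, m_{<i}) + zᵢ and the zᵢ ∼ N(0, σᵢ²I_{d_i}) are independent. Let X ∈ ℝ^d, y₊ ∈ Y, and p₊, p₋ ∈ (0,1) satisfy P(M(X) = y₊) ≥ p₊ ≥ p₋ ≥ max_{y ≠ y₊} P(M(X) = y). Set r_X = (1/(2√(Σ_{i=1}^k 1/σᵢ²)))·(Φ⁻¹(p₊) − Φ⁻¹(p₋)). Then for every e ∈ ℝ^d with ‖e‖₂ ≤ r_X and every y ∈ Y, P(M(X+e) = y₊) ≥ P(M(X+e) = y); that is, y₊ remains a most probable class at X + e. -/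

import Mathlib

open MeasureTheory ProbabilityTheory Real
open scoped NNReal ENNReal

/-- Standard normal CDF Φ. -/
noncomputable def Phi (x : ℝ) : ℝ := ((gaussianReal 0 1) (Set.Iic x)).toReal

/-- Inverse of the standard normal CDF, Φ⁻¹. -/
noncomputable def PhiInv (q : ℝ) : ℝ := Function.invFun Phi q

/-- The trade-off function of the Gaussian mechanism, `G_μ(α) = Φ(Φ⁻¹(1-α) − μ)`. -/
noncomputable def Gmu (μ α : ℝ) : ℝ := Phi (PhiInv (1 - α) - μ)

/-- Euclidean (L2) norm on `ℝ^n`. -/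
noncomputable def l2norm {n : ℕ} (x : Fin n → ℝ) : ℝ := Real.sqrt (∑ i, (x i) ^ 2)

/-- Maximum (L∞) norm on `ℝ^n`. -/
noncomputable def linftyNorm {n : ℕ} (x : Fin n → ℝ) : ℝ := ⨆ i, |x i|

/-- Lp norm on `ℝ^n`. -/
noncomputable def lpNorm {n : ℕ} (p : ℝ) (x : Fin n → ℝ) : ℝ := (∑ i, |x i| ^ p) ^ (1 / p)

/-- `T(P,Q) ≥ f`: every measurable `[0,1]`-valued test `φ` has type II error
`1 − ∫ φ dQ` at least `f` of its level `∫ φ dP`. -/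
def TradeoffGE {Ω : Type*} [MeasurableSpace Ω] (P Q : Measure Ω) (f : ℝ → ℝ) : Prop :=
  ∀ φ : Ω → ℝ, Measurable φ → (∀ ω, φ ω ∈ Set.Icc (0 : ℝ) 1) →
    1 - ∫ ω, φ ω ∂Q ≥ f (∫ ω, φ ω ∂P)

/-- The Gaussian measure `N(v, s·I_d)` on `ℝ^d` (spherical covariance `s ≥ 0`). -/
noncomputable def gaussPi (d : ℕ) (v : Fin d → ℝ) (s : ℝ≥0) : Measure (Fin d → ℝ) :=
  Measure.pi fun i => gaussianReal (v i) s

/-- Deterministic recursion computing the adaptive trajectory: having fixed the input `X`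
and the independent noises `z j`, `trajAux θ X z n` carries the outputs
`m_i = θ_i(X, m_{<i}) + z_i` for the first `n` steps (and `0` on the remaining
coordinates). -/
noncomputable def trajAux {k d : ℕ} {dims : Fin k → ℕ}
    (θ : ∀ i : Fin k, (Fin d → ℝ) → (∀ j : Fin k, Fin (dims j) → ℝ) → (Fin (dims i) → ℝ))
    (X : Fin d → ℝ) (z : ∀ j : Fin k, Fin (dims j) → ℝ) :
    ℕ → ∀ j : Fin k, Fin (dims j) → ℝ
  | 0 => fun _ _ => 0
  | n + 1 =>
      if h : n < k then
        Function.update (trajAux θ X z n) ⟨n, h⟩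
          (θ ⟨n, h⟩ X (trajAux θ X z n) + z ⟨n, h⟩)
      else trajAux θ X z n

/-- The full adaptive trajectory `(m₁, …, m_k)` as a function of the input `X` and the
noises `z`. -/
noncomputable def traj {k d : ℕ} {dims : Fin k → ℕ}
    (θ : ∀ i : Fin k, (Fin d → ℝ) → (∀ j : Fin k, Fin (dims j) → ℝ) → (Fin (dims i) → ℝ))
    (X : Fin d → ℝ) (z : ∀ j : Fin k, Fin (dims j) → ℝ) :
    ∀ j : Fin k, Fin (dims j) → ℝ :=
  trajAux θ X z k

/-- The law of the adaptive mechanism `M(X) = g(m₁, …, m_k)`, where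
`m_i = θ_i(X, m_{<i}) + z_i` and the `z_i ∼ N(0, σ_i² I_{d_i})` are independent. -/
noncomputable def adaptiveMech {k d : ℕ} {dims : Fin k → ℕ} {Y : Type*} [MeasurableSpace Y]
    (θ : ∀ i : Fin k, (Fin d → ℝ) → (∀ j : Fin k, Fin (dims j) → ℝ) → (Fin (dims i) → ℝ))
    (g : (∀ j : Fin k, Fin (dims j) → ℝ) → Y) (σ : Fin k → ℝ) (X : Fin d → ℝ) :
    Measure Y :=
  Measure.map (fun z => g (traj θ X z))
    (Measure.pi fun j => gaussPi (dims j) 0 ((σ j) ^ 2).toNNReal)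

lemma ars_cm1 (δ : ℝ) (s : ℝ≥0) (hs : s ≠ 0) (F : ℝ → ℝ≥0∞) (hF : Measurable F) :
    ∫⁻ z, F (z + δ) ∂gaussianReal 0 s =
      ∫⁻ z, F z * ENNReal.ofReal (Real.exp (δ * z / s - δ ^ 2 / (2 * s))) ∂gaussianReal 0 s := by
  have h1 : ∫⁻ z, F (z + δ) ∂gaussianReal 0 s = ∫⁻ z, F z ∂gaussianReal δ s := by
    have := gaussianReal_map_add_const (μ := 0) (v := s) δ
    rw [zero_add] at this
    rw [← this, lintegral_map hF (by fun_prop)]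
  have hs' : (s : ℝ) ≠ 0 := by exact_mod_cast hs
  rw [h1, gaussianReal_of_var_ne_zero _ hs, gaussianReal_of_var_ne_zero _ hs,
    lintegral_withDensity_eq_lintegral_mul _ (measurable_gaussianPDF _ _) hF,
    lintegral_withDensity_eq_lintegral_mul _ (measurable_gaussianPDF _ _) (by fun_prop)]
  congr 1
  ext z
  simp only [Pi.mul_apply]
  rw [mul_comm, mul_left_comm]
  congr 1
  rw [gaussianPDF, gaussianPDF, ← ENNReal.ofReal_mul (gaussianPDFReal_nonneg _ _ _)]
  congr 1
  rw [gaussianPDFReal, gaussianPDFReal, mul_assoc _ (rexp _) (rexp _), ← Real.exp_add]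
  congr 2
  field_simp
  ring

lemma ars_pi_cons (d : ℕ) (s : ℝ≥0) (F : (Fin (d + 1) → ℝ) → ℝ≥0∞) (hF : Measurable F) :
    ∫⁻ z, F z ∂(Measure.pi fun _ : Fin (d + 1) => gaussianReal 0 s) =
      ∫⁻ t, ∫⁻ z, F (Fin.cons t z) ∂(Measure.pi fun _ : Fin d => gaussianReal 0 s)
        ∂gaussianReal 0 s := by
  have h := (measurePreserving_piFinSuccAbove (fun _ : Fin (d + 1) => gaussianReal 0 s) 0).symm
  rw [← h.lintegral_comp hF, lintegral_prod]
  · refine lintegral_congr fun t => lintegral_congr fun z => ?_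
    congr 1
    ext i
    refine Fin.cases ?_ (fun j => ?_) i
    · rfl
    · exact Fin.insertNth_apply_succAbove (α := fun _ => ℝ) 0 t z j
  · exact (hF.comp (MeasurableEquiv.measurable _)).aemeasurable

lemma ars_meas_cons (d : ℕ) (t : ℝ) : Measurable fun z : Fin d → ℝ =>
    (Fin.cons t z : Fin (d + 1) → ℝ) := by
  rw [measurable_pi_iff]
  intro i
  refine Fin.cases ?_ (fun j => ?_) i
  · simp
  · simpa using measurable_pi_apply j

lemma ars_meas_cons' (d : ℕ) : Measurable fun p : ℝ × (Fin d → ℝ) =>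
    (Fin.cons p.1 p.2 : Fin (d + 1) → ℝ) := by
  rw [measurable_pi_iff]
  intro i
  refine Fin.cases ?_ (fun j => ?_) i
  · simpa using measurable_fst
  · simp only [Fin.cons_succ]; fun_prop

lemma ars_cm (s : ℝ≥0) (hs : s ≠ 0) : ∀ (d : ℕ) (δ : Fin d → ℝ) (F : (Fin d → ℝ) → ℝ≥0∞)
    (_ : Measurable F),
    ∫⁻ z, F (z + δ) ∂(Measure.pi fun _ : Fin d => gaussianReal 0 s) =
      ∫⁻ z, F z * ENNReal.ofReal (Real.exp ((∑ i, δ i * z i / s) - (∑ i, δ i ^ 2 / s) / 2))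
        ∂(Measure.pi fun _ : Fin d => gaussianReal 0 s) := by
  intro d
  induction d with
  | zero =>
    intro δ F hF
    have : ∀ z : Fin 0 → ℝ, z + δ = z := fun z => Subsingleton.elim _ _
    simp [this]
  | succ d ih =>
    intro δ F hF
    rw [ars_pi_cons d s _ (by fun_prop), ars_pi_cons d s _ (by fun_prop)]
    obtain ⟨Ψ, hΨ⟩ : ∃ Ψ : ℝ → ℝ≥0∞, Ψ = (fun u => ∫⁻ z, F (Fin.cons u z) * ENNReal.ofReal (Real.exp ((∑ i, Fin.tail δ i * z i / s)
        - (∑ i, Fin.tail δ i ^ 2 / s) / 2))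
        ∂(Measure.pi fun _ : Fin d => gaussianReal 0 s)) := ⟨_, rfl⟩
    have h1 : ∀ t : ℝ, ∫⁻ z, F (Fin.cons t z + δ) ∂(Measure.pi fun _ : Fin d => gaussianReal 0 s) =
      Ψ (t + δ 0) := by
      intro t
      have := ih (Fin.tail δ) (fun z => F (Fin.cons (t + δ 0) z)) (hF.comp (ars_meas_cons d _))
      simp only [hΨ]
      rw [← this]
      congr 1
      ext z
      congr 1
      ext i
      refine Fin.cases ?_ (fun j => ?_) i <;> simp [Fin.tail]
    rw [lintegral_congr h1, ars_cm1 (δ 0) s hs]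
    · congr 1
      ext t
      simp only [hΨ]
      have hFc : Measurable fun z : Fin d → ℝ => F (Fin.cons t z) := hF.comp (ars_meas_cons d t)
      rw [← lintegral_mul_const _ (by fun_prop)]
      congr 1
      ext z
      rw [mul_assoc, ← ENNReal.ofReal_mul (Real.exp_pos _).le, ← Real.exp_add]
      congr 3
      rw [Fin.sum_univ_succ, Fin.sum_univ_succ]
      simp only [Fin.tail, Fin.cons_zero, Fin.cons_succ]
      have hs' : (s : ℝ) ≠ 0 := by exact_mod_cast hs
      field_simp
      ring
    · rw [hΨ]
      refine Measurable.lintegral_prod_right' (f := fun p : ℝ × (Fin d → ℝ) =>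
        F (Fin.cons p.1 p.2) * ENNReal.ofReal (Real.exp ((∑ i, Fin.tail δ i * p.2 i / s)
        - (∑ i, Fin.tail δ i ^ 2 / s) / 2))) ?_
      exact (hF.comp (ars_meas_cons' d)).mul (by fun_prop)

lemma ars_law (s : ℝ≥0) (hs : s ≠ 0) : ∀ (d : ℕ) (δ : Fin d → ℝ) (f : ℝ → ℝ≥0∞)
    (_ : Measurable f),
    ∫⁻ z, f (∑ i, δ i * z i / s) ∂(Measure.pi fun _ : Fin d => gaussianReal 0 s) =
      ∫⁻ t, f t ∂gaussianReal 0 (∑ i, δ i ^ 2 / s).toNNReal := by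
  intro d
  induction d with
  | zero => intro δ f hf; simp [gaussianReal_zero_var, lintegral_dirac' _ hf]
  | succ d ih =>
    intro δ f hf
    have hs' : (s : ℝ) ≠ 0 := by exact_mod_cast hs
    rw [ars_pi_cons d s _ (by fun_prop)]
    have h1 : ∀ t : ℝ, ∫⁻ z : Fin d → ℝ, f (∑ i, δ i * (Fin.cons t z : Fin (d+1) → ℝ) i / s)
        ∂(Measure.pi fun _ : Fin d => gaussianReal 0 s) =
        (fun u => ∫⁻ y, f (u + y) ∂gaussianReal 0 (∑ i, Fin.tail δ i ^ 2 / s).toNNReal)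
          (δ 0 / s * t) := by
      intro t
      refine Eq.trans ?_ (ih (Fin.tail δ) (fun y => f (δ 0 / s * t + y)) (by fun_prop))
      congr 1
      ext z
      rw [Fin.sum_univ_succ]
      simp only [Fin.tail, Fin.cons_zero, Fin.cons_succ]
      congr 2
      ring
    rw [lintegral_congr h1]
    have hm : Measurable (fun u => ∫⁻ y, f (u + y)
        ∂gaussianReal 0 (∑ i, Fin.tail δ i ^ 2 / s).toNNReal) :=
      Measurable.lintegral_prod_right' (f := fun p : ℝ × ℝ => f (p.1 + p.2)) (by fun_prop)
    rw [← lintegral_map (g := fun t => δ 0 / s * t) hm (by fun_prop),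
      gaussianReal_map_const_mul, ← Measure.lintegral_conv hf, gaussianReal_conv_gaussianReal]
    congr 2
    · simp
    · rw [Fin.sum_univ_succ, Real.toNNReal_add (by positivity)
        (Finset.sum_nonneg fun i _ => by positivity)]
      congr 1
      ext
      rw [Real.coe_toNNReal _ (by positivity)]
      push_cast
      field_simp

/-- The hockey-stick potential. -/
noncomputable def arsH (c : ℝ≥0∞) (v : ℝ≥0) (x : ℝ≥0∞) : ℝ≥0∞ :=
  ∫⁻ t, (x * ENNReal.ofReal (Real.exp (t - v / 2)) - c) ∂gaussianReal 0 v

lemma arsH_meas (c : ℝ≥0∞) (v : ℝ≥0) : Measurable (arsH c v) :=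
  Measurable.lintegral_prod_right' (f := fun p : ℝ≥0∞ × ℝ =>
    p.1 * ENNReal.ofReal (Real.exp (p.2 - v / 2)) - c) (by fun_prop)

lemma arsH_zero (c x : ℝ≥0∞) : arsH c 0 x = x - c := by
  rw [arsH, gaussianReal_zero_var, lintegral_dirac' _ (by fun_prop)]
  simp

lemma arsH_add (c : ℝ≥0∞) (v w : ℝ≥0) (x : ℝ≥0∞) :
    ∫⁻ u, arsH c v (x * ENNReal.ofReal (Real.exp (u - w / 2))) ∂gaussianReal 0 w =
      arsH c (w + v) x := by
  unfold arsH
  have := gaussianReal_conv_gaussianReal (m₁ := 0) (m₂ := 0) (v₁ := w) (v₂ := v)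
  rw [zero_add] at this
  rw [← this, Measure.lintegral_conv (by fun_prop)]
  congr 1
  ext u
  congr 1
  ext t
  rw [mul_assoc, ← ENNReal.ofReal_mul (Real.exp_pos _).le, ← Real.exp_add]
  congr 4
  push_cast
  ring

lemma ars_exp_one (w : ℝ≥0) :
    ∫⁻ u, ENNReal.ofReal (Real.exp (u - w / 2)) ∂gaussianReal 0 w = 1 := by
  rw [← ofReal_integral_eq_lintegral_ofReal]
  · have := congrFun (mgf_id_gaussianReal (μ := 0) (v := w)) 1
    simp only [mgf, id, one_mul] at this
    simp_rw [Real.exp_sub]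
    rw [integral_div, this]
    simp
  · simp_rw [Real.exp_sub]
    have := integrable_exp_mul_gaussianReal (μ := 0) (v := w) 1
    simp only [one_mul] at this
    exact this.div_const _
  · exact Filter.Eventually.of_forall fun _ => (Real.exp_pos _).le

lemma arsH_le_add (c : ℝ≥0∞) (v w : ℝ≥0) (x : ℝ≥0∞) : arsH c v x ≤ arsH c (v + w) x := by
  rw [← arsH_add, arsH]
  refine lintegral_mono fun u => ?_
  set y := x * ENNReal.ofReal (Real.exp (u - v / 2)) with hy
  rw [tsub_le_iff_right, arsH]
  calc y = ∫⁻ t, y * ENNReal.ofReal (Real.exp (t - w / 2)) ∂gaussianReal 0 w := by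
        rw [lintegral_const_mul _ (by fun_prop), ars_exp_one, mul_one]
    _ ≤ ∫⁻ t, ((y * ENNReal.ofReal (Real.exp (t - w / 2)) - c) + c) ∂gaussianReal 0 w :=
        lintegral_mono fun t => le_tsub_add
    _ = _ := by rw [lintegral_add_right _ measurable_const]; simp

lemma arsH_mono (c : ℝ≥0∞) {v w : ℝ≥0} (h : v ≤ w) (x : ℝ≥0∞) : arsH c v x ≤ arsH c w x := by
  obtain ⟨u, rfl⟩ := exists_add_of_le h
  exact arsH_le_add c v u x

/-- One adaptive step. -/
lemma ars_step (c x : ℝ≥0∞) (v b s : ℝ≥0) (hs : s ≠ 0) (d : ℕ) (δ : Fin d → ℝ)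
    (hδ : ∑ i, δ i ^ 2 / s ≤ (b : ℝ)) (G G' : (Fin d → ℝ) → ℝ≥0∞) (hG : Measurable G)
    (hG' : Measurable G')
    (h : ∀ x z, x * G' z ≤ c * G z + arsH c v x) :
    x * ∫⁻ z, G' (z + δ) ∂gaussPi d 0 s ≤ c * ∫⁻ z, G z ∂gaussPi d 0 s + arsH c (b + v) x := by
  have hg : gaussPi d 0 s = Measure.pi fun _ : Fin d => gaussianReal 0 s := rfl
  rw [hg, ars_cm s hs d δ G' hG', ← lintegral_const_mul _ (by fun_prop),
    ← lintegral_const_mul _ hG]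
  set w : ℝ≥0 := (∑ i, δ i ^ 2 / s).toNNReal with hw
  have hwc : (∑ i, δ i ^ 2 / (s : ℝ)) = w := by
    rw [hw, Real.coe_toNNReal _ (Finset.sum_nonneg fun i _ => by positivity)]
  have hwb : w ≤ b := by rw [← NNReal.coe_le_coe, ← hwc]; exact hδ
  have hHm := arsH_meas c v
  calc _ ≤ ∫⁻ z, (c * G z + arsH c v (x * ENNReal.ofReal
          (Real.exp ((∑ i, δ i * z i / s) - w / 2))))
          ∂(Measure.pi fun _ : Fin d => gaussianReal 0 s) := by
        refine lintegral_mono fun z => ?_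
        rw [hwc]
        refine le_trans (le_of_eq ?_) (h _ z)
        ring
    _ = ∫⁻ z, c * G z ∂(Measure.pi fun _ : Fin d => gaussianReal 0 s)
        + arsH c (w + v) x := by
        rw [lintegral_add_left (by fun_prop), ← arsH_add c v w x,
          ars_law s hs d δ (fun t => arsH c v (x * ENNReal.ofReal (Real.exp (t - w / 2))))
            (by fun_prop)]
    _ ≤ _ := by gcongr; exact arsH_mono c (by gcongr) x
lemma ars_resample {k : ℕ} {E : Fin k → Type*} [∀ j, MeasurableSpace (E j)]
    (μ : ∀ j, Measure (E j)) [∀ j, IsProbabilityMeasure (μ j)] (i : Fin k)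
    (F : (∀ j, E j) → ℝ≥0∞) (hF : Measurable F) :
    ∫⁻ z, F z ∂Measure.pi μ = ∫⁻ z, ∫⁻ w, F (Function.update z i w) ∂μ i ∂Measure.pi μ := by
  have hm : Measurable fun z => ∫⁻ w, F (Function.update z i w) ∂μ i :=
    Measurable.lintegral_prod_right' (f := fun p : (∀ j, E j) × E i =>
      F (Function.update p.1 i p.2)) (hF.comp measurable_update')
  refine lintegral_eq_of_lmarginal_eq {i} hF hm ?_
  rw [lmarginal_singleton, lmarginal_singleton]
  simp

section ars
variable {k d : ℕ} {dims : Fin k → ℕ}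

lemma trajAux_indep
    (θ : ∀ i : Fin k, (Fin d → ℝ) → (∀ j : Fin k, Fin (dims j) → ℝ) → (Fin (dims i) → ℝ))
    (X : Fin d → ℝ) (z : ∀ j : Fin k, Fin (dims j) → ℝ) (i : Fin k) (w : Fin (dims i) → ℝ) :
    ∀ n : ℕ, n ≤ i → trajAux θ X (Function.update z i w) n = trajAux θ X z n := by
  intro n
  induction n with
  | zero => intro _; rfl
  | succ n ih =>
    intro h
    have h1 := ih (by omega)
    simp only [trajAux, h1]
    split_ifs with hn
    · have : (⟨n, hn⟩ : Fin k) ≠ i := by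
        intro h2
        rw [← h2] at h
        simp at h
      rw [Function.update_of_ne this]
    · rfl

lemma trajAux_meas
    (θ : ∀ i : Fin k, (Fin d → ℝ) → (∀ j : Fin k, Fin (dims j) → ℝ) → (Fin (dims i) → ℝ))
    (X : Fin d → ℝ) (hm : ∀ i, Measurable (θ i X)) :
    ∀ n : ℕ, Measurable fun z => trajAux θ X z n := by
  intro n
  induction n with
  | zero => exact measurable_const
  | succ n ih =>
    by_cases hn : n < k
    · simp only [trajAux, hn, dif_pos]
      refine (measurable_update' (a := (⟨n, hn⟩ : Fin k))).comp (ih.prodMk ?_)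
      exact ((hm _).comp ih).add (measurable_pi_apply _)
    · simpa only [trajAux, hn, dif_neg, not_false_eq_true] using ih

/-- Value function of the remaining `r` steps starting from step `n` in state `m`. -/
noncomputable def arsV
    (θ : ∀ i : Fin k, (Fin d → ℝ) → (∀ j : Fin k, Fin (dims j) → ℝ) → (Fin (dims i) → ℝ))
    (s : Fin k → ℝ≥0) (X : Fin d → ℝ) (f : (∀ j : Fin k, Fin (dims j) → ℝ) → ℝ≥0∞) :
    ℕ → ℕ → (∀ j : Fin k, Fin (dims j) → ℝ) → ℝ≥0∞
  | 0, _ => f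
  | r + 1, n => fun m =>
      if h : n < k then
        ∫⁻ w, arsV θ s X f r (n + 1) (Function.update m ⟨n, h⟩ (w + θ ⟨n, h⟩ X m))
          ∂gaussPi (dims ⟨n, h⟩) 0 (s ⟨n, h⟩)
      else arsV θ s X f r (n + 1) m

instance ars_prob (n : ℕ) (v : Fin n → ℝ) (s : ℝ≥0) : IsProbabilityMeasure (gaussPi n v s) := by
  unfold gaussPi; infer_instance

lemma arsV_meas
    (θ : ∀ i : Fin k, (Fin d → ℝ) → (∀ j : Fin k, Fin (dims j) → ℝ) → (Fin (dims i) → ℝ))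
    (s : Fin k → ℝ≥0) (X : Fin d → ℝ) (f : (∀ j : Fin k, Fin (dims j) → ℝ) → ℝ≥0∞)
    (hm : ∀ i, Measurable (θ i X)) (hf : Measurable f) :
    ∀ r n : ℕ, Measurable (arsV θ s X f r n) := by
  intro r
  induction r with
  | zero => intro n; exact hf
  | succ r ih =>
    intro n
    by_cases hn : n < k
    · simp only [arsV, hn, dif_pos]
      refine Measurable.lintegral_prod_right' (f := fun p : (∀ j : Fin k, Fin (dims j) → ℝ) ×
        (Fin (dims ⟨n, hn⟩) → ℝ) => arsV θ s X f r (n + 1) (Function.update p.1 ⟨n, hn⟩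
          (p.2 + θ ⟨n, hn⟩ X p.1))) ?_
      refine (ih (n + 1)).comp ((measurable_update' (a := (⟨n, hn⟩ : Fin k))).comp
        (measurable_fst.prodMk ?_))
      exact measurable_snd.add ((hm _).comp measurable_fst)
    · simpa only [arsV, hn, dif_neg, not_false_eq_true] using ih (n + 1)

lemma arsV_traj
    (θ : ∀ i : Fin k, (Fin d → ℝ) → (∀ j : Fin k, Fin (dims j) → ℝ) → (Fin (dims i) → ℝ))
    (s : Fin k → ℝ≥0) (X : Fin d → ℝ) (f : (∀ j : Fin k, Fin (dims j) → ℝ) → ℝ≥0∞)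
    (hm : ∀ i, Measurable (θ i X)) (hf : Measurable f) :
    ∀ r n : ℕ, ∫⁻ z, arsV θ s X f r n (trajAux θ X z n)
        ∂(Measure.pi fun j => gaussPi (dims j) 0 (s j)) =
      ∫⁻ z, f (trajAux θ X z (n + r)) ∂(Measure.pi fun j => gaussPi (dims j) 0 (s j)) := by
  intro r
  induction r with
  | zero => intro n; rfl
  | succ r ih =>
    intro n
    have h1 := ih (n + 1)
    rw [show n + (r + 1) = n + 1 + r by ring, ← h1]
    by_cases hn : n < k
    · rw [ars_resample _ ⟨n, hn⟩ (fun z => arsV θ s X f r (n + 1) (trajAux θ X z (n + 1)))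
        ((arsV_meas θ s X f hm hf r (n + 1)).comp (trajAux_meas θ X hm (n + 1)))]
      refine lintegral_congr fun z => ?_
      simp only [arsV, hn, dif_pos]
      refine lintegral_congr fun w => ?_
      simp only [trajAux, hn, dif_pos]
      rw [trajAux_indep θ X z ⟨n, hn⟩ w n le_rfl, Function.update_self, add_comm w]
    · simp only [arsV, trajAux, hn, dif_neg, not_false_eq_true]

lemma arsV_zero
    (θ : ∀ i : Fin k, (Fin d → ℝ) → (∀ j : Fin k, Fin (dims j) → ℝ) → (Fin (dims i) → ℝ))
    (s : Fin k → ℝ≥0) (X : Fin d → ℝ) (f : (∀ j : Fin k, Fin (dims j) → ℝ) → ℝ≥0∞)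
    (hm : ∀ i, Measurable (θ i X)) (hf : Measurable f) :
    ∫⁻ z, f (traj θ X z) ∂(Measure.pi fun j => gaussPi (dims j) 0 (s j)) =
      arsV θ s X f k 0 (fun _ _ => 0) := by
  have := arsV_traj θ s X f hm hf k 0
  rw [zero_add] at this
  unfold traj
  rw [← this]
  simp [trajAux]

lemma arsV_main
    (θ : ∀ i : Fin k, (Fin d → ℝ) → (∀ j : Fin k, Fin (dims j) → ℝ) → (Fin (dims i) → ℝ))
    (s b : Fin k → ℝ≥0) (hs : ∀ i, s i ≠ 0) (X X' : Fin d → ℝ)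
    (hm : ∀ i, Measurable (θ i X)) (hm' : ∀ i, Measurable (θ i X'))
    (hb : ∀ i m, ∑ j, (θ i X' m - θ i X m) j ^ 2 / s i ≤ (b i : ℝ))
    (S : Set (∀ j : Fin k, Fin (dims j) → ℝ)) (hS : MeasurableSet S) (c : ℝ≥0∞) :
    ∀ (r n : ℕ) (m : ∀ j : Fin k, Fin (dims j) → ℝ) (x : ℝ≥0∞),
      x * arsV θ s X' (S.indicator 1) r n m ≤ c * arsV θ s X (S.indicator 1) r n m +
        arsH c (∑ j ∈ Finset.range r, if h : n + j < k then b ⟨n + j, h⟩ else 0) x := by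
  have hf : Measurable (S.indicator (1 : (∀ j : Fin k, Fin (dims j) → ℝ) → ℝ≥0∞)) :=
    measurable_one.indicator hS
  intro r
  induction r with
  | zero =>
    intro n m x
    simp only [arsV, Finset.range_zero, Finset.sum_empty, arsH_zero]
    by_cases h : m ∈ S
    · simp [h, le_add_tsub]
    · simp [h]
  | succ r ih =>
    intro n m x
    have ih1 := ih (n + 1)
    have hsum : (∑ j ∈ Finset.range (r + 1), if h : n + j < k then b ⟨n + j, h⟩ else 0) =
        (∑ j ∈ Finset.range r, if h : n + 1 + j < k then b ⟨n + 1 + j, h⟩ else 0) +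
          (if h : n < k then b ⟨n, h⟩ else 0) := by
      rw [Finset.sum_range_succ']
      congr 1
      refine Finset.sum_congr rfl fun j _ => ?_
      have e : n + (j + 1) = n + 1 + j := by omega
      simp only [e]
    rw [hsum]
    by_cases hn : n < k
    · simp only [arsV, hn, dif_pos]
      rw [add_comm (Finset.sum _ _)]
      have hu : Measurable fun z : Fin (dims ⟨n, hn⟩) → ℝ =>
          Function.update m ⟨n, hn⟩ (z + θ ⟨n, hn⟩ X m) :=
        (measurable_update m).comp (measurable_id.add_const _)
      have := ars_step c x (∑ j ∈ Finset.range r, if h : n + 1 + j < k then b ⟨n + 1 + j, h⟩ else 0)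
        (b ⟨n, hn⟩) (s ⟨n, hn⟩) (hs _) _ (θ ⟨n, hn⟩ X' m - θ ⟨n, hn⟩ X m) (hb _ m)
        (fun z => arsV θ s X (S.indicator 1) r (n + 1)
          (Function.update m ⟨n, hn⟩ (z + θ ⟨n, hn⟩ X m)))
        (fun z => arsV θ s X' (S.indicator 1) r (n + 1)
          (Function.update m ⟨n, hn⟩ (z + θ ⟨n, hn⟩ X m)))
        ((arsV_meas θ s X _ hm hf r _).comp hu) ((arsV_meas θ s X' _ hm' hf r _).comp hu)
        (fun x z => ih1 _ x)
      refine le_trans (le_of_eq ?_) this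
      congr 1
      refine lintegral_congr fun w => ?_
      congr 2
      abel
    · simp only [arsV, hn, dif_neg, not_false_eq_true, add_zero]
      exact ih1 m x

end ars

lemma ars_Ici (v : ℝ≥0) (hv : v ≠ 0) (b : ℝ) :
    gaussianReal 0 v (Set.Ici (-(b * √v))) = gaussianReal 0 1 (Set.Iic b) := by
  have hv' : 0 < √(v : ℝ) := Real.sqrt_pos.2 (by positivity)
  have := gaussianReal_map_const_mul (μ := 0) (v := 1) (-√(v : ℝ))
  have h2 : gaussianReal 0 v = (gaussianReal 0 1).map (fun x => -√(v : ℝ) * x) := by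
    rw [this]
    congr 1
    · simp
    · ext; simp
  rw [h2, Measure.map_apply (by fun_prop) measurableSet_Ici]
  congr 1
  ext y
  simp only [Set.mem_preimage, Set.mem_Ici, Set.mem_Iic]
  constructor
  · intro h; nlinarith
  · intro h; nlinarith

lemma arsH_eval (v : ℝ≥0) (hv : v ≠ 0) (a : ℝ) :
    arsH (ENNReal.ofReal (Real.exp (-(a * √v) - v / 2))) v 1 +
      ENNReal.ofReal (Real.exp (-(a * √v) - v / 2)) * gaussianReal 0 1 (Set.Iic a) =
      gaussianReal 0 1 (Set.Iic (a + √v)) := by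
  have hv' : (v : ℝ) ≠ 0 := by exact_mod_cast hv
  have hvv : √(v : ℝ) * √v = v := Real.mul_self_sqrt v.2
  rw [← ars_Ici v hv a, ← ars_Ici v hv (a + √v)]
  have hS : MeasurableSet (Set.Ici (-(a * √(v : ℝ)))) := measurableSet_Ici
  have h1 : gaussianReal 0 v (Set.Ici (-((a + √v) * √v))) =
      ∫⁻ z, (Set.Ici (-(a * √(v : ℝ)))).indicator (1 : ℝ → ℝ≥0∞) (z + v) ∂gaussianReal 0 v := by
    rw [← lintegral_indicator_one measurableSet_Ici]
    refine lintegral_congr fun z => ?_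
    have : z ∈ Set.Ici (-((a + √v) * √v)) ↔ z + v ∈ Set.Ici (-(a * √(v : ℝ))) := by
      simp only [Set.mem_Ici]
      constructor <;> intro h <;> nlinarith
    by_cases hz : z ∈ Set.Ici (-((a + √v) * √v))
    · rw [Set.indicator_of_mem hz, Set.indicator_of_mem (this.1 hz)]; rfl
    · rw [Set.indicator_of_notMem hz, Set.indicator_of_notMem (fun h => hz (this.2 h))]
  rw [h1, ars_cm1 v v hv _ (measurable_one.indicator hS), ← lintegral_indicator_one hS,
    ← lintegral_const_mul _ (measurable_one.indicator hS), arsH, ← lintegral_add_left (by fun_prop)]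
  refine lintegral_congr fun z => ?_
  have he : (v : ℝ) * z / v - (v : ℝ) ^ 2 / (2 * v) = z - v / 2 := by field_simp
  rw [he, one_mul]
  by_cases hz : z ∈ Set.Ici (-(a * √(v : ℝ)))
  · rw [Set.indicator_of_mem hz]
    simp only [Pi.one_apply, mul_one, one_mul]
    refine tsub_add_cancel_of_le (ENNReal.ofReal_le_ofReal (Real.exp_le_exp.2 ?_))
    simpa using hz
  · rw [Set.indicator_of_notMem hz]
    simp only [mul_zero, zero_mul, add_zero]
    refine tsub_eq_zero_of_le (ENNReal.ofReal_le_ofReal (Real.exp_le_exp.2 ?_))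
    simp only [Set.mem_Ici, not_le] at hz
    linarith

lemma Phi_eq_cdf : Phi = cdf (gaussianReal 0 1) := by
  ext x; rw [cdf_eq_real]; rfl

lemma Phi_mono : Monotone Phi := by rw [Phi_eq_cdf]; exact monotone_cdf _

lemma Phi_cont : Continuous Phi := by
  rw [Phi_eq_cdf, continuous_iff_continuousAt]
  intro x
  rw [continuousAt_iff_continuous_left_right]
  refine ⟨?_, (cdf _).right_continuous x⟩
  rw [← continuousWithinAt_Iio_iff_Iic, (cdf _).mono.continuousWithinAt_Iio_iff_leftLim_eq]
  have h := (cdf (gaussianReal 0 1)).measure_singleton x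
  have := nullSingletonClass_gaussianReal (μ := 0) (v := 1) one_ne_zero
  rw [measure_cdf, measure_singleton, eq_comm, ENNReal.ofReal_eq_zero] at h
  have h2 := (cdf (gaussianReal 0 1)).mono.leftLim_le (le_refl x)
  linarith

lemma Phi_PhiInv {p : ℝ} (hp : p ∈ Set.Ioo (0 : ℝ) 1) : Phi (PhiInv p) = p := by
  refine Function.invFun_eq ?_
  have h0 := tendsto_cdf_atBot (gaussianReal 0 1)
  have h1 := tendsto_cdf_atTop (gaussianReal 0 1)
  rw [← Phi_eq_cdf] at h0 h1
  obtain ⟨x, hx⟩ := (h0.eventually_lt_const hp.1).exists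
  obtain ⟨y, hy⟩ := (h1.eventually_const_lt hp.2).exists
  exact mem_range_of_exists_le_of_exists_ge Phi_cont ⟨x, hx.le⟩ ⟨y, hy.le⟩

lemma Phi_neg (x : ℝ) : Phi (-x) = 1 - Phi x := by
  have := nullSingletonClass_gaussianReal (μ := 0) (v := 1) one_ne_zero
  have h1 := ars_Ici 1 one_ne_zero (-x)
  simp only [NNReal.coe_one, Real.sqrt_one, mul_one, neg_neg] at h1
  rw [Phi, ← h1, Phi, ← measure_congr (Ioi_ae_eq_Ici (a := x)), ← Set.compl_Iic]
  exact probReal_compl_eq_one_sub measurableSet_Iic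

lemma ars_tradeoff {k d : ℕ} {dims : Fin k → ℕ}
    (θ : ∀ i : Fin k, (Fin d → ℝ) → (∀ j : Fin k, Fin (dims j) → ℝ) → (Fin (dims i) → ℝ))
    (s b : Fin k → ℝ≥0) (hs : ∀ i, s i ≠ 0) (X X' : Fin d → ℝ)
    (hm : ∀ i, Measurable (θ i X)) (hm' : ∀ i, Measurable (θ i X'))
    (hb : ∀ i m, ∑ j, (θ i X' m - θ i X m) j ^ 2 / s i ≤ (b i : ℝ))
    (hv : ∑ i, b i ≠ 0)
    (S : Set (∀ j : Fin k, Fin (dims j) → ℝ)) (hS : MeasurableSet S) (a : ℝ)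
    (hP : ((Measure.pi fun j => gaussPi (dims j) 0 (s j)) (traj θ X ⁻¹' S)).toReal ≤ Phi a) :
    ((Measure.pi fun j => gaussPi (dims j) 0 (s j)) (traj θ X' ⁻¹' S)).toReal
      ≤ Phi (a + √(∑ i, b i : ℝ≥0)) := by
  have hf : Measurable (S.indicator (1 : (∀ j : Fin k, Fin (dims j) → ℝ) → ℝ≥0∞)) :=
    measurable_one.indicator hS
  have key : ∀ Z : Fin d → ℝ, (∀ i, Measurable (θ i Z)) →
      (Measure.pi fun j => gaussPi (dims j) 0 (s j)) (traj θ Z ⁻¹' S) =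
        arsV θ s Z (S.indicator 1) k 0 (fun _ _ => 0) := by
    intro Z hZ
    have hT : MeasurableSet (traj θ Z ⁻¹' S) := trajAux_meas θ Z hZ k hS
    rw [← arsV_zero θ s Z _ hZ hf, ← lintegral_indicator_one hT]
    rfl
  set v : ℝ≥0 := ∑ i, b i with hvdef
  set c : ℝ≥0∞ := ENNReal.ofReal (Real.exp (-(a * √v) - v / 2)) with hc
  have h := arsV_main θ s b hs X X' hm hm' hb S hS c k 0 (fun _ _ => 0) 1
  have hsum : (∑ j ∈ Finset.range k, if h : 0 + j < k then b ⟨0 + j, h⟩ else 0) = v := by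
    rw [hvdef, Finset.sum_range]
    refine Finset.sum_congr rfl fun j _ => ?_
    simp
  rw [hsum, ← key X hm, ← key X' hm', one_mul] at h
  unfold Phi at hP ⊢
  rw [ENNReal.toReal_le_toReal (measure_ne_top _ _) (measure_ne_top _ _)] at hP ⊢
  rw [← arsH_eval v hv a, add_comm]
  exact h.trans (by gcongr)

/-- **Main result: Adaptive Randomized Smoothing.**
Each adaptive step `θ_i` depends only on the outputs of previous steps and is 1-Lipschitz
in the input `X`.  If `P(M(X) = y₊) ≥ p₊ ≥ p₋ ≥ max_{y ≠ y₊} P(M(X) = y)` then for every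
`e` with `‖e‖₂ ≤ (1/(2√(Σᵢ 1/σᵢ²)))(Φ⁻¹(p₊) − Φ⁻¹(p₋))`, `y₊` remains a most probable
class of the adaptive mechanism at `X + e`. -/
theorem adaptive_randomized_smoothing {k d : ℕ} {dims : Fin k → ℕ} {Y : Type*} [Fintype Y]
    [MeasurableSpace Y] [MeasurableSingletonClass Y]
    (σ : Fin k → ℝ) (hσ : ∀ i, 0 < σ i)
    (θ : ∀ i : Fin k, (Fin d → ℝ) → (∀ j : Fin k, Fin (dims j) → ℝ) → (Fin (dims i) → ℝ))
    (hθmeas : ∀ i, Measurable fun q : (Fin d → ℝ) × (∀ j : Fin k, Fin (dims j) → ℝ) =>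
      θ i q.1 q.2)
    (hθprefix : ∀ (i : Fin k) (X : Fin d → ℝ) (m m' : ∀ j : Fin k, Fin (dims j) → ℝ),
      (∀ j : Fin k, j < i → m j = m' j) → θ i X m = θ i X m')
    (hθlip : ∀ (i : Fin k) (X X' : Fin d → ℝ) (m : ∀ j : Fin k, Fin (dims j) → ℝ),
      l2norm (θ i X m - θ i X' m) ≤ l2norm (X - X'))
    (g : (∀ j : Fin k, Fin (dims j) → ℝ) → Y) (hg : Measurable g)
    (X : Fin d → ℝ) (yPlus : Y) (pPlus pMinus : ℝ)
    (hpPlus : pPlus ∈ Set.Ioo (0 : ℝ) 1) (hpMinus : pMinus ∈ Set.Ioo (0 : ℝ) 1)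
    (hplus : ((adaptiveMech θ g σ X) {yPlus}).toReal ≥ pPlus)
    (horder : pPlus ≥ pMinus)
    (hminus : ∀ y : Y, y ≠ yPlus → ((adaptiveMech θ g σ X) {y}).toReal ≤ pMinus) :
    ∀ e : Fin d → ℝ,
      l2norm e ≤ 1 / (2 * Real.sqrt (∑ i, 1 / (σ i) ^ 2)) * (PhiInv pPlus - PhiInv pMinus) →
      ∀ y : Y,
        ((adaptiveMech θ g σ (X + e)) {yPlus}).toReal ≥
          ((adaptiveMech θ g σ (X + e)) {y}).toReal := by
  intro e he y
  have hθm : ∀ Z i, Measurable (θ i Z) := fun Z i =>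
    (hθmeas i).comp (measurable_const.prodMk measurable_id)
  by_cases hy : y = yPlus
  · rw [hy]
  set s : Fin k → ℝ≥0 := fun i => ((σ i) ^ 2).toNNReal with hsdef
  have hsc : ∀ i, (s i : ℝ) = σ i ^ 2 := fun i => Real.coe_toNNReal _ (sq_nonneg _)
  have hs : ∀ i, s i ≠ 0 := fun i => by
    have := hσ i
    rw [← NNReal.coe_ne_zero, hsc]; positivity
  have hre : 0 ≤ l2norm e := Real.sqrt_nonneg _
  rcases hre.eq_or_lt with h0 | hpos
  · have : e = 0 := by
      unfold l2norm at h0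
      rw [eq_comm, Real.sqrt_eq_zero (Finset.sum_nonneg fun i _ => sq_nonneg _),
        Finset.sum_eq_zero_iff_of_nonneg (fun i _ => sq_nonneg _)] at h0
      ext i
      simpa using h0 i (Finset.mem_univ _)
    rw [this, add_zero]
    exact (hminus y hy).trans (horder.le.trans hplus)
  have hA0 : 0 ≤ ∑ i, 1 / (σ i) ^ 2 := Finset.sum_nonneg fun i _ => by positivity
  set A := ∑ i, 1 / (σ i) ^ 2 with hA
  have hApos : 0 < √A := by
    rcases (Real.sqrt_nonneg A).eq_or_lt with h | h
    · rw [← h] at he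
      simp at he
      linarith
    · exact h
  have hAA : √A * √A = A := Real.mul_self_sqrt hA0
  set b : Fin k → ℝ≥0 := fun i => (l2norm e ^ 2 / σ i ^ 2).toNNReal with hbdef
  have hbc : ∀ i, (b i : ℝ) = l2norm e ^ 2 / σ i ^ 2 := fun i =>
    Real.coe_toNNReal _ (by positivity)
  have hbsum : ((∑ i, b i : ℝ≥0) : ℝ) = (l2norm e * √A) ^ 2 := by
    push_cast
    simp_rw [hbc]
    rw [mul_pow, sq √A, hAA, hA, Finset.mul_sum]
    refine Finset.sum_congr rfl fun i _ => by ring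
  have hsq : √((∑ i, b i : ℝ≥0) : ℝ) = l2norm e * √A := by
    rw [hbsum, Real.sqrt_sq (by positivity)]
  have hv : ∑ i, b i ≠ 0 := by
    rw [← NNReal.coe_ne_zero, hbsum]; positivity
  have hb : ∀ i m, ∑ j, (θ i (X + e) m - θ i X m) j ^ 2 / s i ≤ (b i : ℝ) := by
    intro i m
    have h := hθlip i (X + e) X m
    rw [add_sub_cancel_left] at h
    rw [← Finset.sum_div, hsc, hbc]
    gcongr
    have h2 := pow_le_pow_left₀ (Real.sqrt_nonneg _) h 2
    rwa [l2norm, Real.sq_sqrt (Finset.sum_nonneg fun i _ => sq_nonneg _)] at h2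
  have hmu : 2 * (l2norm e * √A) ≤ PhiInv pPlus - PhiInv pMinus := by
    rw [one_div, inv_mul_eq_div, le_div_iff₀ (by positivity)] at he
    linarith
  set γ := Measure.pi fun j => gaussPi (dims j) 0 (s j) with hγ
  have hmech : ∀ (Z : Fin d → ℝ) (w : Y), (adaptiveMech θ g σ Z) {w} =
      γ (traj θ Z ⁻¹' (g ⁻¹' {w})) := by
    intro Z w
    have hT : Measurable fun z => g (traj θ Z z) := hg.comp (trajAux_meas θ Z (hθm Z) k)
    rw [adaptiveMech, Measure.map_apply hT
      (measurableSet_singleton w)]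
    rfl
  have hgm : ∀ w, MeasurableSet (g ⁻¹' {w}) := fun w => hg (measurableSet_singleton w)
  have hcompl : ∀ Z : Fin d → ℝ, (γ (traj θ Z ⁻¹' (g ⁻¹' {yPlus})ᶜ)).toReal =
      1 - (γ (traj θ Z ⁻¹' (g ⁻¹' {yPlus}))).toReal := fun Z =>
    probReal_compl_eq_one_sub (trajAux_meas θ Z (hθm Z) k (hgm yPlus))
  rw [hmech] at hplus ⊢
  rw [hmech]
  have h1 := hminus y hy
  rw [hmech, ← Phi_PhiInv hpMinus] at h1
  have h2 := ars_tradeoff θ s b hs X (X + e) (hθm _) (hθm _) hb hv _ (hgm y) _ h1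
  have h3 := ars_tradeoff θ s b hs X (X + e) (hθm _) (hθm _) hb hv _ (hgm yPlus).compl
    (-PhiInv pPlus) (by
      rw [Phi_neg, Phi_PhiInv hpPlus]
      have := hcompl X
      linarith)
  have h4 := hcompl (X + e)
  rw [hsq] at h2 h3
  rw [show -PhiInv pPlus + l2norm e * √A = -(PhiInv pPlus - l2norm e * √A) by ring, Phi_neg] at h3
  have h5 : Phi (PhiInv pMinus + l2norm e * √A) ≤ Phi (PhiInv pPlus - l2norm e * √A) :=
    Phi_mono (by linarith)
  linarith
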